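/- Let X be a nonempty finite set. A semimetric d : A(X) × A(X) → [0,∞) satisfies Axioms 1, 2, 3 and 4 if, and only if, d is the top-difference semimetric D, i.e., d(≿,⊵) = Σ_{S ⊆ X} |M(S,≿) △ M(S,⊵)| for all acyclic orders ≿, ⊵ on X. -/

import Mathlib

open Classical Finset symmDiff

section PrefDefs

variable {X : Type*}

/-- The asymmetric part `R^>` of a binary relation `R`. -/
def asymPart (R : X → X → Prop) : X → X → Prop := fun x y => R x y ∧ ¬ R y x

/-- `R` is acyclic: there is no cycle of pairwise distinct elements
`z_0 R^> z_1 R^> ⋯ R^> z_k R^> z_0`. -/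
def AcyclicRel (R : X → X → Prop) : Prop :=
  ¬ ∃ (k : ℕ) (z : Fin (k + 1) → X), Function.Injective z ∧
      ∀ i : Fin (k + 1), asymPart R (z i) (z (i + 1))

/-- An acyclic order: a reflexive acyclic binary relation. -/
def AcyclicOrd (R : X → X → Prop) : Prop := Reflexive R ∧ AcyclicRel R

/-- `M(S,R)`: the set of `R`-maximal elements of `S`. -/
noncomputable def MaxSet [DecidableEq X] (S : Finset X) (R : X → X → Prop) : Finset X :=
  S.filter fun x => ∀ y ∈ S, ¬ asymPart R y x

/-- The μ-top-difference semimetric, where the measure μ is given by the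
weights `w x = μ {x}`. -/
noncomputable def Dmu [Fintype X] [DecidableEq X] (w : X → ℝ) (R R' : X → X → Prop) : ℝ :=
  ∑ S : Finset X, ∑ x ∈ symmDiff (MaxSet S R) (MaxSet S R'), w x

/-- The top-difference semimetric `D`. -/
noncomputable def Dtop [Fintype X] [DecidableEq X] (R R' : X → X → Prop) : ℕ :=
  ∑ S : Finset X, (symmDiff (MaxSet S R) (MaxSet S R')).card

/-- `≿ ⊕ (a,b)`: if `b ∼ a` delete `(b,a)`, if `a, b` are `≿`-incomparable add `(a,b)`. -/
def oplusR (R : X → X → Prop) (a b : X) : X → X → Prop :=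
  fun x y => (R x y ∧ ¬(R b a ∧ x = b ∧ y = a)) ∨ (¬ R b a ∧ x = a ∧ y = b)

/-- `≿ ⊖ (a,b)`: delete the pair `(a,b)`. -/
def ominusR (R : X → X → Prop) (a b : X) : X → X → Prop :=
  fun x y => R x y ∧ ¬(x = a ∧ y = b)

/-- `≿ → ≿_0 ↠ ⊵` : `R0` is a one-step perturbation of `R` toward `R'`. -/
def OneStep (R R0 R' : X → X → Prop) : Prop :=
  AcyclicOrd R0 ∧
  ((∃ a b, asymPart R a b ∧ ¬ asymPart R' a b ∧
      (∀ x, asymPart R' x b → asymPart R x b) ∧ R0 = ominusR R a b) ∨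
   (∃ a b, ¬ asymPart R a b ∧ ¬ asymPart R b a ∧ asymPart R' a b ∧ R0 = oplusR R a b))

/-- `Q` is in-between `R` and `R'` : `Q` is an n-step perturbation of `R` toward `R'`
for some positive integer n. -/
def InBetween (R R' Q : X → X → Prop) : Prop :=
  ∃ (n : ℕ) (c : Fin (n + 1) → (X → X → Prop)),
    OneStep R (c 0) R' ∧
    (∀ i : Fin n, OneStep (c i.castSucc) (c i.succ) R') ∧
    c (Fin.last n) = Q

/-- `N(b,≿)`: the number of `x ≠ b` with not `x ≻ b`. -/
noncomputable def Nnum [Fintype X] (R : X → X → Prop) (b : X) : ℕ :=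
  (Finset.univ.filter fun x => x ≠ b ∧ ¬ asymPart R x b).card

/-- `≿_{ab}`: the partial order whose asymmetric part is `(X \ {a,b}) × {a,b}`. -/
def RabRel (a b : X) : X → X → Prop :=
  fun x y => x = y ∨ ((x ≠ a ∧ x ≠ b) ∧ (y = a ∨ y = b))

/-- `≿_{ab}^+`: as `≿_{ab}` but with `a` ranked strictly above `b`. -/
def RabPlusRel (a b : X) : X → X → Prop :=
  fun x y => RabRel a b x y ∨ (x = a ∧ y = b)

/-- `d` is a semimetric on the set of acyclic orders on `X`. -/
def IsSemimetricOn (d : (X → X → Prop) → (X → X → Prop) → ℝ) : Prop :=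
  (∀ R R', AcyclicOrd R → AcyclicOrd R' → 0 ≤ d R R') ∧
  (∀ R, AcyclicOrd R → d R R = 0) ∧
  (∀ R R', AcyclicOrd R → AcyclicOrd R' → d R R' = d R' R) ∧
  (∀ R R' R'', AcyclicOrd R → AcyclicOrd R' → AcyclicOrd R'' →
    d R R'' ≤ d R R' + d R' R'')

/-- Axiom 1. -/
def Axiom1 (d : (X → X → Prop) → (X → X → Prop) → ℝ) : Prop :=
  ∀ R R0 R' : X → X → Prop, AcyclicOrd R → AcyclicOrd R' →
    InBetween R R' R0 → d R R' = d R R0 + d R0 R'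

/-- Axiom 2. -/
def Axiom2 (d : (X → X → Prop) → (X → X → Prop) → ℝ) : Prop :=
  ∀ a b : X, a ≠ b → d (RabRel a b) (RabPlusRel a b) = 1

/-- Axiom 3. -/
def Axiom3 [Fintype X] (d : (X → X → Prop) → (X → X → Prop) → ℝ) : Prop :=
  (∀ (R : X → X → Prop) (a b : X), AcyclicOrd R → a ≠ b →
      ¬ asymPart R a b → ¬ asymPart R b a → AcyclicOrd (oplusR R a b) →
      d R (oplusR R a b) = (2 : ℝ) ^ (Nnum R b - 1) * d (RabRel a b) (RabPlusRel a b)) ∧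
  (∀ (R : X → X → Prop) (a b : X), AcyclicOrd R → asymPart R a b →
      d R (ominusR R a b) = (2 : ℝ) ^ (Nnum R b) * d (RabRel a b) (RabPlusRel a b))

/-- Axiom 4. -/
def Axiom4 (d : (X → X → Prop) → (X → X → Prop) → ℝ) : Prop :=
  ∀ R R' : X → X → Prop, AcyclicOrd R → AcyclicOrd R' →
    (∀ x y, asymPart R x y ↔ asymPart R' x y) → d R R' = 0

end PrefDefs

/-!
Reading each perturbation as adjoining one pair `(a, b)` to the strict part of a relation, the only
menus `S` whose maximal set changes are those with `{a, b} ⊆ S ⊆ {x | not x ≻ b}`, where `≻` is the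
strict part without the pair, and there only `b` drops out. Counting them gives the powers of two in
Axiom 3, so Axioms 2 and 3 say exactly that `d` agrees with `D` on single steps.

A step toward `⊵` moves every `M(S, ·)` to a set between the current one and `M(S, ⊵)`, and the
cardinality of a symmetric difference is additive along such sets; so `D` satisfies Axiom 1.
Conversely, any acyclic order can be perturbed step by step until its strict part is that of `⊵`,
and Axioms 1 and 4 propagate the equality `d = D` along this path.
-/

section Relations

open Relation

variable {α : Type*} {r s : α → α → Prop} {a b x y : α}

theorem exists_nodup_isChain_of_reflTransGen (h : ReflTransGen r a b) :
    ∃ l : List α, (a :: l).IsChain r ∧ (a :: l).getLast? = some b ∧ (a :: l).Nodup := by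
  induction h using ReflTransGen.head_induction_on with
  | refl => exact ⟨[], by simp⟩
  | @head a c hac _ ih =>
    obtain ⟨l, hchain, hlast, hnodup⟩ := ih
    by_cases ha : a ∈ c :: l
    · obtain ⟨u, v, huv⟩ := List.append_of_mem ha
      rw [huv] at hchain hlast hnodup
      exact ⟨v, hchain.right_of_append, by simpa using hlast, hnodup.of_append_right⟩
    · exact ⟨c :: l, hchain.cons_cons hac, by simpa using hlast, List.nodup_cons.2 ⟨ha, hnodup⟩⟩

theorem exists_injective_cycle_of_transGen_self (h : TransGen r a a) :
    ∃ (k : ℕ) (z : Fin (k + 1) → α), z.Injective ∧ ∀ i, r (z i) (z (i + 1)) := by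
  obtain ⟨c, hac, hca⟩ := TransGen.tail'_iff.1 h
  obtain ⟨l, hchain, hlast, hnodup⟩ := exists_nodup_isChain_of_reflTransGen hac
  refine ⟨l.length, (a :: l).get, List.nodup_iff_injective_get.1 hnodup, fun i => ?_⟩
  induction i using Fin.lastCases with
  | last =>
    have hc : (a :: l).get (Fin.last l.length) = c := by
      simpa [List.getLast?_eq_getElem?] using hlast
    rw [Fin.last_add_one, hc]
    exact hca
  | cast i =>
    rw [Fin.coeSucc_eq_succ]
    exact List.isChain_iff_getElem.1 hchain i (by simp)

theorem transGen_self_of_cycle {k : ℕ} {z : Fin (k + 1) → α} (h : ∀ i, r (z i) (z (i + 1))) :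
    TransGen r (z 0) (z 0) := by
  have hreach : ∀ i, ReflTransGen r (z 0) (z i) := by
    intro i
    induction i using Fin.induction with
    | zero => exact .refl
    | succ i ih => exact ih.tail (Fin.coeSucc_eq_succ (a := i) ▸ h i.castSucc)
  exact .tail' (hreach (Fin.last k)) (Fin.last_add_one k ▸ h (Fin.last k))

theorem transGen_or_of_adjoin_pair (h : TransGen (fun u v => r u v ∨ u = a ∧ v = b) x y) :
    TransGen r x y ∨ ReflTransGen r x a ∧ ReflTransGen r b y := by
  induction h with
  | single h =>
    rcases h with h | ⟨rfl, rfl⟩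
    · exact .inl (.single h)
    · exact .inr ⟨.refl, .refl⟩
  | tail _ h ih =>
    rcases h with h | ⟨rfl, rfl⟩
    · exact ih.imp (·.tail h) (.imp_right (·.tail h))
    · exact .inr ⟨ih.elim TransGen.to_reflTransGen And.left, .refl⟩

theorem transGen_self_of_reflTransGen_of_imp (hrs : ∀ x y, TransGen s y b → r x y → s x y)
    (hby : ReflTransGen r b y) (hyb : TransGen s y b) : TransGen s b b := by
  induction hby with
  | refl => exact hyb
  | @tail x y _ hxy ih => exact ih (.head (hrs x y hyb hxy) hyb)

end Relations

section AcyclicOrders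

open Relation

variable {X : Type*} {R Q : X → X → Prop} {a b : X}

theorem asymPart_irrefl (R : X → X → Prop) (x : X) : ¬ asymPart R x x := fun h => h.2 h.1

theorem asymPart_ne (h : asymPart R a b) : a ≠ b := by
  rintro rfl
  exact asymPart_irrefl R a h

theorem acyclicRel_iff_transGen_irrefl :
    AcyclicRel R ↔ ∀ x, ¬ TransGen (asymPart R) x x := by
  refine ⟨fun h x hx => h (exists_injective_cycle_of_transGen_self hx), ?_⟩
  rintro h ⟨k, z, -, hz⟩
  exact h _ (transGen_self_of_cycle hz)

theorem AcyclicRel.mono (hQ : AcyclicRel Q) (h : asymPart R ≤ asymPart Q) : AcyclicRel R :=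
  acyclicRel_iff_transGen_irrefl.2 fun x hx =>
    acyclicRel_iff_transGen_irrefl.1 hQ x (TransGen.mono h x x hx)

theorem AcyclicRel.wellFounded_transGen [Finite X] (h : AcyclicRel R) :
    WellFounded (TransGen (asymPart R)) :=
  have : Std.Irrefl (TransGen (asymPart R)) := ⟨acyclicRel_iff_transGen_irrefl.1 h⟩
  Finite.wellFounded_of_trans_of_irrefl _

/-- The strict part of `Q` is that of `R` together with the new pair `(a, b)`. Both kinds of
perturbation have this form: `R ⊕ (a, b)` adjoins the pair to `R`, and `R` adjoins it to
`R ⊖ (a, b)`. -/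
structure AdjoinsPair (R Q : X → X → Prop) (a b : X) : Prop where
  not_asymPart : ¬ asymPart R a b
  asymPart_iff : ∀ x y, asymPart Q x y ↔ asymPart R x y ∨ x = a ∧ y = b

namespace AdjoinsPair

theorem asymPart_pair (h : AdjoinsPair R Q a b) : asymPart Q a b :=
  (h.asymPart_iff a b).2 (.inr ⟨rfl, rfl⟩)

theorem ne (h : AdjoinsPair R Q a b) : a ≠ b := asymPart_ne h.asymPart_pair

theorem asymPart_le (h : AdjoinsPair R Q a b) : asymPart R ≤ asymPart Q :=
  fun x y hxy => (h.asymPart_iff x y).2 (.inl hxy)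

theorem acyclicRel (h : AdjoinsPair R Q a b) (hR : AcyclicRel R)
    (hba : ¬ ReflTransGen (asymPart R) b a) : AcyclicRel Q := by
  have hQ : asymPart Q = fun x y => asymPart R x y ∨ x = a ∧ y = b :=
    funext₂ fun x y => propext (h.asymPart_iff x y)
  rw [acyclicRel_iff_transGen_irrefl, hQ]
  intro x hx
  rcases transGen_or_of_adjoin_pair hx with hx | ⟨hxa, hbx⟩
  · exact acyclicRel_iff_transGen_irrefl.1 hR x hx
  · exact hba (hbx.trans hxa)

end AdjoinsPair

theorem adjoinsPair_oplusR (hne : a ≠ b) (hab : ¬ asymPart R a b) (hba : ¬ asymPart R b a) :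
    AdjoinsPair R (oplusR R a b) a b := by
  refine ⟨hab, fun x y => ?_⟩
  unfold asymPart oplusR at *
  grind

theorem adjoinsPair_ominusR (hab : asymPart R a b) : AdjoinsPair (ominusR R a b) R a b := by
  constructor <;> unfold asymPart ominusR at * <;> grind

theorem asymPart_rabRel_iff (x y : X) :
    asymPart (RabRel a b) x y ↔ (x ≠ a ∧ x ≠ b) ∧ (y = a ∨ y = b) := by
  unfold asymPart RabRel
  grind

theorem adjoinsPair_rabRel (hne : a ≠ b) : AdjoinsPair (RabRel a b) (RabPlusRel a b) a b := by
  refine ⟨by simp [asymPart_rabRel_iff], fun x y => ?_⟩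
  unfold asymPart RabPlusRel RabRel
  grind

theorem AcyclicOrd.oplusR (hR : AcyclicOrd R) (hab : ¬ asymPart R a b)
    (hba : ¬ ReflTransGen (asymPart R) b a) : AcyclicOrd (oplusR R a b) := by
  have hne : a ≠ b := by
    rintro rfl
    exact hba .refl
  refine ⟨fun x => .inl ⟨hR.1 x, fun ⟨_, hxb, hxa⟩ => hne (hxa.symm.trans hxb)⟩, ?_⟩
  exact (adjoinsPair_oplusR hne hab fun h => hba (.single h)).acyclicRel hR.2 hba

theorem AcyclicOrd.ominusR (hR : AcyclicOrd R) (hab : asymPart R a b) :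
    AcyclicOrd (ominusR R a b) := by
  refine ⟨fun x => ⟨hR.1 x, fun ⟨hxa, hxb⟩ => asymPart_ne hab (hxa.symm.trans hxb)⟩, ?_⟩
  exact hR.2.mono (adjoinsPair_ominusR hab).asymPart_le

theorem acyclicOrd_rabRel (a b : X) : AcyclicOrd (RabRel a b) := by
  refine ⟨fun x => .inl rfl, acyclicRel_iff_transGen_irrefl.2 fun x hx => ?_⟩
  obtain ⟨y, hxy, -⟩ := TransGen.head'_iff.1 hx
  obtain ⟨z, -, hzx⟩ := TransGen.tail'_iff.1 hx
  rw [asymPart_rabRel_iff] at hxy hzx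
  exact hzx.2.elim hxy.1.1 hxy.1.2

theorem acyclicOrd_rabPlusRel (hne : a ≠ b) : AcyclicOrd (RabPlusRel a b) := by
  have hba : ¬ ReflTransGen (asymPart (RabRel a b)) b a := fun h => by
    rcases h.cases_head with hab | ⟨c, hbc, -⟩
    · exact hne hab.symm
    · exact ((asymPart_rabRel_iff b c).1 hbc).1.2 rfl
  exact ⟨fun x => .inl (.inl rfl),
    (adjoinsPair_rabRel hne).acyclicRel (acyclicOrd_rabRel a b).2 hba⟩

end AcyclicOrders

section Perturbations

open Relation

variable {X : Type*} {R Q R' : X → X → Prop}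

theorem OneStep.adjoinsPair_or (h : OneStep R Q R') :
    (∃ a b, AdjoinsPair Q R a b ∧ ¬ asymPart R' a b ∧ ∀ x, asymPart R' x b → asymPart R x b) ∨
      ∃ a b, AdjoinsPair R Q a b ∧ asymPart R' a b := by
  rcases h with ⟨-, ⟨a, b, hab, hab', hb, rfl⟩ | ⟨a, b, hab, hba, hab', rfl⟩⟩
  · exact .inl ⟨a, b, adjoinsPair_ominusR hab, hab', hb⟩
  · exact .inr ⟨a, b, adjoinsPair_oplusR (asymPart_ne hab') hab hba, hab'⟩

theorem OneStep.inBetween (h : OneStep R Q R') : InBetween R R' Q :=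
  ⟨0, fun _ => Q, h, fun i => i.elim0, rfl⟩

theorem InBetween.acyclicOrd (h : InBetween R R' Q) : AcyclicOrd Q := by
  obtain ⟨n, c, hfirst, hstep, rfl⟩ := h
  cases n with
  | zero => exact hfirst.1
  | succ n => exact (hstep (Fin.last n)).1

theorem exists_oneStep [Finite X] (hR : AcyclicOrd R) (hR' : AcyclicRel R')
    (hne : asymPart R ≠ asymPart R') : ∃ Q, OneStep R Q R' := by
  by_cases hdel : ∃ a b, asymPart R a b ∧ ¬ asymPart R' a b ∧
      ∀ x, asymPart R' x b → asymPart R x b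
  · obtain ⟨a, b, hab, hab', hb⟩ := hdel
    exact ⟨_, hR.ominusR hab, .inl ⟨a, b, hab, hab', hb, rfl⟩⟩
  let deficient : Set X := {b | ∃ a, asymPart R' a b ∧ ¬ asymPart R a b}
  have imp_of_notMem : ∀ y ∉ deficient, ∀ x, asymPart R x y → asymPart R' x y := by
    intro y hy x hxy
    by_contra hxy'
    refine hdel ⟨x, y, hxy, hxy', fun w hw => ?_⟩
    by_contra hwy
    exact hy ⟨w, hw, hwy⟩
  have nonempty : deficient.Nonempty := by
    by_contra! hempty
    have hnot : ∀ y, y ∉ deficient := fun y => hempty ▸ Set.notMem_empty y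
    refine hne (funext₂ fun x y => propext ⟨imp_of_notMem y (hnot y) x, fun hxy => ?_⟩)
    by_contra hxy'
    exact hnot y ⟨x, hxy, hxy'⟩
  -- Above a topmost deficient `b`, every `R`-step is an `R'`-step, so an `R`-path from `b` to `a`
  -- would close up to an `R'`-cycle.
  obtain ⟨b, ⟨a, hab', hab⟩, hb⟩ := hR'.wellFounded_transGen.has_min deficient nonempty
  have hba : ¬ ReflTransGen (asymPart R) b a := fun hpath =>
    acyclicRel_iff_transGen_irrefl.1 hR' b <| transGen_self_of_reflTransGen_of_imp
      (fun x y hyb => imp_of_notMem y (fun hy => hb y hy hyb) x) hpath (.single hab')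
  exact ⟨_, hR.oplusR hab hba, .inr ⟨a, b, hab, fun h => hba (.single h), hab', rfl⟩⟩

/-- The pairs on which the strict parts of two relations disagree; its decrease is what makes
repeated perturbation toward a fixed order terminate. -/
def strictDiff (R R' : X → X → Prop) : Set (X × X) :=
  {p | ¬ (asymPart R p.1 p.2 ↔ asymPart R' p.1 p.2)}

theorem OneStep.strictDiff_ssubset (h : OneStep R Q R') : strictDiff Q R' ⊂ strictDiff R R' := by
  suffices ∃ a b, (a, b) ∈ strictDiff R R' ∧ (a, b) ∉ strictDiff Q R' ∧
      ∀ x y, (x, y) ≠ (a, b) → (asymPart Q x y ↔ asymPart R x y) by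
    obtain ⟨a, b, hR, hQ, hQR⟩ := this
    refine Set.ssubset_iff_of_subset (fun p hp => ?_) |>.2 ⟨(a, b), hR, hQ⟩
    rw [strictDiff, Set.mem_ofPred_eq, ← hQR p.1 p.2 (ne_of_mem_of_not_mem hp hQ)]
    exact hp
  rcases h.adjoinsPair_or with ⟨a, b, hadj, hab', -⟩ | ⟨a, b, hadj, hab'⟩ <;>
    refine ⟨a, b, ?_, ?_, fun x y hxy => ?_⟩
  all_goals
    have := hadj.not_asymPart
    have := hadj.asymPart_pair
    simp_all [strictDiff, hadj.asymPart_iff]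

theorem oneStep_induction [Finite X] {motive : (X → X → Prop) → Prop} (hR' : AcyclicRel R')
    (base : ∀ R, AcyclicOrd R → asymPart R = asymPart R' → motive R)
    (step : ∀ R Q, AcyclicOrd R → OneStep R Q R' → motive Q → motive R)
    (R : X → X → Prop) (hR : AcyclicOrd R) : motive R := by
  induction hD : strictDiff R R' using WellFoundedLT.induction generalizing R with
  | ind D ih =>
    by_cases heq : asymPart R = asymPart R'
    · exact base R hR heq
    · obtain ⟨Q, hQ⟩ := exists_oneStep hR hR' heq
      exact step R Q hR hQ (ih _ (hD ▸ hQ.strictDiff_ssubset) Q hQ.1 rfl)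

end Perturbations

section MaximalSets

variable {X : Type*} [DecidableEq X] {R Q R' : X → X → Prop} {a b x : X} {S : Finset X}

theorem mem_maxSet : x ∈ MaxSet S R ↔ x ∈ S ∧ ∀ y ∈ S, ¬ asymPart R y x := by
  simp only [MaxSet, Finset.mem_filter]

theorem maxSet_congr (h : asymPart R = asymPart Q) (S : Finset X) : MaxSet S R = MaxSet S Q := by
  simp only [MaxSet, h]

theorem AdjoinsPair.mem_maxSet_iff (h : AdjoinsPair R Q a b) :
    x ∈ MaxSet S Q ↔ x ∈ MaxSet S R ∧ (x = b → a ∉ S) := by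
  simp only [mem_maxSet, h.asymPart_iff]
  grind

theorem AdjoinsPair.symmDiff_maxSet (h : AdjoinsPair R Q a b) (S : Finset X) :
    MaxSet S R ∆ MaxSet S Q = if a ∈ S ∧ b ∈ MaxSet S R then {b} else ∅ := by
  ext x
  rw [Finset.mem_symmDiff, h.mem_maxSet_iff]
  grind

/-- `Q` is between `R` and `R'` as far as choices are concerned: on every menu `S`, the set
`M(S, Q)` lies between the intersection and the union of `M(S, R)` and `M(S, R')`. -/
def TopBetween (R Q R' : X → X → Prop) : Prop :=
  ∀ S, MaxSet S R ∩ MaxSet S R' ⊆ MaxSet S Q ∧ MaxSet S Q ⊆ MaxSet S R ∪ MaxSet S R'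

theorem TopBetween.trans {P : X → X → Prop} (hQ : TopBetween R Q R') (hP : TopBetween Q P R') :
    TopBetween R P R' := fun S =>
  ⟨(subset_inter (hQ S).1 inter_subset_right).trans (hP S).1,
    (hP S).2.trans (union_subset (hQ S).2 subset_union_right)⟩

theorem OneStep.topBetween (h : OneStep R Q R') : TopBetween R Q R' := by
  intro S
  simp only [subset_iff, mem_inter, mem_union]
  rcases h.adjoinsPair_or with ⟨a, b, hadj, hab', hb⟩ | ⟨a, b, hadj, hab'⟩
  · refine ⟨fun x hx => (hadj.mem_maxSet_iff.1 hx.1).1, fun x hxQ => ?_⟩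
    by_cases hxb : x = b ∧ a ∈ S
    · obtain ⟨rfl, -⟩ := hxb
      obtain ⟨hxS, hmax⟩ := mem_maxSet.1 hxQ
      refine .inr (mem_maxSet.2 ⟨hxS, fun y hy hyx => ?_⟩)
      rcases (hadj.asymPart_iff y x).1 (hb y hyx) with hyx' | ⟨rfl, -⟩
      exacts [hmax y hy hyx', hab' hyx]
    · exact .inl (hadj.mem_maxSet_iff.2 ⟨hxQ, not_and.1 hxb⟩)
  · refine ⟨fun x ⟨hxR, hxR'⟩ => hadj.mem_maxSet_iff.2 ⟨hxR, ?_⟩,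
      fun x hx => .inl (hadj.mem_maxSet_iff.1 hx).1⟩
    rintro rfl ha
    exact (mem_maxSet.1 hxR').2 a ha hab'

theorem InBetween.topBetween (h : InBetween R R' Q) : TopBetween R Q R' := by
  obtain ⟨n, c, hfirst, hstep, rfl⟩ := h
  have : ∀ i, TopBetween R (c i) R' := by
    intro i
    induction i using Fin.induction with
    | zero => exact hfirst.topBetween
    | succ i ih => exact ih.trans (hstep i).topBetween
  exact this _

end MaximalSets

section TopDifference

theorem card_symmDiff_add_card_symmDiff {α : Type*} [DecidableEq α] {A B C : Finset α}
    (hinter : A ∩ C ⊆ B) (hunion : B ⊆ A ∪ C) : #(A ∆ B) + #(B ∆ C) = #(A ∆ C) := by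
  have hdisj : Disjoint (A ∆ B) (B ∆ C) := by
    simp only [disjoint_left, Finset.mem_symmDiff]
    grind
  rw [← card_union_of_disjoint hdisj, ← Finset.symmDiff_eq_union hdisj, symmDiff_assoc,
    symmDiff_symmDiff_cancel_left]

variable {X : Type*} [Fintype X] {R Q R' : X → X → Prop} {a b : X}

theorem card_filter_not_asymPart (R : X → X → Prop) (b : X) :
    #{x | ¬ asymPart R x b} = Nnum R b + 1 := by
  rw [← card_erase_add_one (a := b) (by simp [asymPart_irrefl])]
  congr 2
  ext x
  simp

theorem AdjoinsPair.nnum_eq (h : AdjoinsPair R Q a b) : Nnum R b = Nnum Q b + 1 := by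
  have hinsert : univ.filter (¬ asymPart R · b) = insert a (univ.filter (¬ asymPart Q · b)) := by
    ext x
    have := h.not_asymPart
    simp only [mem_filter, mem_univ, mem_insert, h.asymPart_iff]
    grind
  have hcard := congrArg card hinsert
  rwa [card_insert_of_notMem (by simp [h.asymPart_pair]), card_filter_not_asymPart,
    card_filter_not_asymPart, Nat.add_right_cancel_iff] at hcard

theorem nnum_rabRel (hne : a ≠ b) : Nnum (RabRel a b) b = 1 := by
  rw [Nnum, card_eq_one]
  refine ⟨a, ?_⟩
  ext x
  simp only [asymPart_rabRel_iff, mem_filter, mem_univ, mem_singleton]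
  grind

variable [DecidableEq X]

theorem dtop_comm (R Q : X → X → Prop) : Dtop R Q = Dtop Q R := by
  simp only [Dtop, symmDiff_comm]

theorem dtop_eq_zero (h : asymPart R = asymPart Q) : Dtop R Q = 0 := by
  simp [Dtop, maxSet_congr h]

theorem TopBetween.dtop_add_dtop (h : TopBetween R Q R') :
    Dtop R Q + Dtop Q R' = Dtop R R' := by
  simp only [Dtop, ← sum_add_distrib]
  exact sum_congr rfl fun S _ => card_symmDiff_add_card_symmDiff (h S).1 (h S).2

theorem filter_mem_maxSet_eq_Icc (R : X → X → Prop) (a b : X) :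
    ({S | a ∈ S ∧ b ∈ MaxSet S R} : Finset (Finset X)) =
      Icc {a, b} ({x | ¬ asymPart R x b} : Finset X) := by
  ext S
  simp only [mem_filter, mem_univ, true_and, mem_maxSet, mem_Icc, subset_iff,
    mem_insert, mem_singleton]
  grind

theorem AdjoinsPair.dtop_eq (h : AdjoinsPair R Q a b) : Dtop R Q = 2 ^ (Nnum R b - 1) := by
  have hsub : {a, b} ⊆ ({x | ¬ asymPart R x b} : Finset X) := by
    simp [insert_subset_iff, h.not_asymPart, asymPart_irrefl]
  calc Dtop R Q = #{S : Finset X | a ∈ S ∧ b ∈ MaxSet S R} := by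
        simp only [Dtop, h.symmDiff_maxSet, apply_ite card, card_singleton, card_empty,
          card_filter]
    _ = 2 ^ (Nnum R b + 1 - 2) := by
        rw [filter_mem_maxSet_eq_Icc, card_Icc_finset hsub, card_filter_not_asymPart,
          card_pair h.ne]
    _ = 2 ^ (Nnum R b - 1) := by rw [Nat.add_sub_add_right]

theorem dtop_oplusR (hne : a ≠ b) (hab : ¬ asymPart R a b) (hba : ¬ asymPart R b a) :
    Dtop R (oplusR R a b) = 2 ^ (Nnum R b - 1) :=
  (adjoinsPair_oplusR hne hab hba).dtop_eq

theorem dtop_ominusR (hab : asymPart R a b) : Dtop R (ominusR R a b) = 2 ^ Nnum R b := by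
  have hadj := adjoinsPair_ominusR hab
  rw [dtop_comm, hadj.dtop_eq, hadj.nnum_eq, Nat.add_sub_cancel]

theorem dtop_rabRel_rabPlusRel (hne : a ≠ b) : Dtop (RabRel a b) (RabPlusRel a b) = 1 := by
  rw [(adjoinsPair_rabRel hne).dtop_eq, nnum_rabRel hne, Nat.sub_self, pow_zero]

end TopDifference

section Characterization

variable {X : Type*} [Fintype X] [DecidableEq X] {d : (X → X → Prop) → (X → X → Prop) → ℝ}

theorem OneStep.eq_dtop {R Q R' : X → X → Prop} (h2 : Axiom2 d) (h3 : Axiom3 d)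
    (hR : AcyclicOrd R) (h : OneStep R Q R') : d R Q = Dtop R Q := by
  obtain ⟨hQ, ⟨a, b, hab, -, -, rfl⟩ | ⟨a, b, hab, hba, hab', rfl⟩⟩ := h
  · rw [h3.2 R a b hR hab, h2 a b (asymPart_ne hab), dtop_ominusR hab]
    simp
  · have hne := asymPart_ne hab'
    rw [h3.1 R a b hR hne hab hba hQ, h2 a b hne, dtop_oplusR hne hab hba]
    simp

theorem eq_dtop_of_axioms (h1 : Axiom1 d) (h2 : Axiom2 d) (h3 : Axiom3 d) (h4 : Axiom4 d)
    {R R' : X → X → Prop} (hR : AcyclicOrd R) (hR' : AcyclicOrd R') : d R R' = Dtop R R' := by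
  refine oneStep_induction (motive := fun R => d R R' = Dtop R R') hR'.2
    (fun R hR heq => ?_) (fun R Q hR hQ ih => ?_) R hR
  · rw [h4 R R' hR hR' (by simp [heq]), dtop_eq_zero heq, Nat.cast_zero]
  · calc d R R' = d R Q + d Q R' := h1 R Q R' hR hR' hQ.inBetween
      _ = Dtop R Q + Dtop Q R' := by rw [hQ.eq_dtop h2 h3 hR, ih]
      _ = Dtop R R' := by rw [← hQ.topBetween.dtop_add_dtop, Nat.cast_add]

theorem axiom1_of_eq_dtop
    (hd : ∀ R R', AcyclicOrd R → AcyclicOrd R' → d R R' = Dtop R R') : Axiom1 d := by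
  intro R Q R' hR hR' hQ
  rw [hd R R' hR hR', hd R Q hR hQ.acyclicOrd, hd Q R' hQ.acyclicOrd hR',
    ← hQ.topBetween.dtop_add_dtop, Nat.cast_add]

theorem axiom2_of_eq_dtop
    (hd : ∀ R R', AcyclicOrd R → AcyclicOrd R' → d R R' = Dtop R R') : Axiom2 d := by
  intro a b hne
  rw [hd _ _ (acyclicOrd_rabRel a b) (acyclicOrd_rabPlusRel hne), dtop_rabRel_rabPlusRel hne,
    Nat.cast_one]

theorem axiom3_of_eq_dtop
    (hd : ∀ R R', AcyclicOrd R → AcyclicOrd R' → d R R' = Dtop R R') : Axiom3 d := by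
  refine ⟨fun R a b hR hne hab hba hQ => ?_, fun R a b hR hab => ?_⟩
  · rw [hd R _ hR hQ, axiom2_of_eq_dtop hd a b hne, dtop_oplusR hne hab hba]
    simp
  · rw [hd R _ hR (hR.ominusR hab), axiom2_of_eq_dtop hd a b (asymPart_ne hab), dtop_ominusR hab]
    simp

theorem axiom4_of_eq_dtop
    (hd : ∀ R R', AcyclicOrd R → AcyclicOrd R' → d R R' = Dtop R R') : Axiom4 d := by
  intro R R' hR hR' hiff
  rw [hd R R' hR hR', dtop_eq_zero (funext₂ fun x y => propext (hiff x y)), Nat.cast_zero]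

end Characterization

theorem stmt_7_general {X : Type*} [Fintype X] [DecidableEq X]
    (d : (X → X → Prop) → (X → X → Prop) → ℝ) :
    (Axiom1 d ∧ Axiom2 d ∧ Axiom3 d ∧ Axiom4 d) ↔
      ∀ R R' : X → X → Prop, AcyclicOrd R → AcyclicOrd R' → d R R' = (Dtop R R' : ℝ) :=
  ⟨fun ⟨h1, h2, h3, h4⟩ _ _ hR hR' => eq_dtop_of_axioms h1 h2 h3 h4 hR hR', fun hd =>
    ⟨axiom1_of_eq_dtop hd, axiom2_of_eq_dtop hd, axiom3_of_eq_dtop hd, axiom4_of_eq_dtop hd⟩⟩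

/-- Theorem 3.2: a semimetric on the acyclic orders on a nonempty finite
set satisfies Axioms 1-4 iff it is the top-difference semimetric `D`. -/
theorem stmt_7 {X : Type*} [Fintype X] [DecidableEq X] [Nonempty X]
    (d : (X → X → Prop) → (X → X → Prop) → ℝ) (hd : IsSemimetricOn d) :
    (Axiom1 d ∧ Axiom2 d ∧ Axiom3 d ∧ Axiom4 d) ↔
      ∀ R R' : X → X → Prop, AcyclicOrd R → AcyclicOrd R' →
        d R R' = (Dtop R R' : ℝ) :=
  stmt_7_general d
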